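/- For every n=(n₁,n₂,n₃)∈ℤ³ with all nᵢ≥1, the type-I box spline B_n is globally of class C^r on ℝ² with r = min{n₁+n₂, n₁+n₃, n₂+n₃} − 2; more precisely, for each i∈{1,2,3}, B_n is of class C^{dᵢ(n)} on a neighbourhood of every edge of G of type i, where d(n) = (n₂+n₃−2, n₁+n₃−2, n₁+n₂−2); in particular B_n ∈ S^{d(n)}(M, P_{n₁+n₂+n₃−2}) for every multicell domain M of G. -/

import Mathlib

/- ## The three-directional (type-I) grid -/

noncomputable section

open MvPolynomial Set Function

/-- Points of the plane. -/
abbrev Pt := ℝ × ℝ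

/-- Bivariate real polynomials `ℝ[x,y]`. -/
abbrev BPoly := MvPolynomial (Fin 2) ℝ

/-- Evaluation of a bivariate polynomial at a point of the plane. -/
def evalP (q : BPoly) (p : Pt) : ℝ := MvPolynomial.eval ![p.1, p.2] q

/-- Triangles of the three-directional grid `G`:  `⟨v, false⟩` is the "lower"
triangle with vertices `v, v+(1,0), v+(1,1)`, and `⟨v, true⟩` is the "upper"
triangle with vertices `v, v+(0,1), v+(1,1)`. -/
structure Tri where
  v : ℤ × ℤ
  up : Bool
deriving DecidableEq

namespace Tri

/-- The open triangle in the plane realizing a combinatorial triangle. -/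
def toSet (T : Tri) : Set Pt :=
  if T.up then
    {p | (T.v.1 : ℝ) < p.1 ∧ p.1 - (T.v.1 : ℝ) < p.2 - (T.v.2 : ℝ) ∧ p.2 < (T.v.2 : ℝ) + 1}
  else
    {p | (T.v.2 : ℝ) < p.2 ∧ p.2 - (T.v.2 : ℝ) < p.1 - (T.v.1 : ℝ) ∧ p.1 < (T.v.1 : ℝ) + 1}

/-- The closed triangle. -/
def cl (T : Tri) : Set Pt := closure T.toSet

/-- The three lattice vertices of a triangle. -/
def vertices (T : Tri) : Finset (ℤ × ℤ) :=
  if T.up then {T.v, (T.v.1, T.v.2 + 1), (T.v.1 + 1, T.v.2 + 1)}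
  else {T.v, (T.v.1 + 1, T.v.2), (T.v.1 + 1, T.v.2 + 1)}

end Tri

/-- Edges of the grid: a lattice point together with a direction type
(`0 ↦ e₁ = (1,0)`, `1 ↦ e₂ = (0,1)`, `2 ↦ e₃ = (1,1)`); the edge of type `i`
at `v` joins `v` to `v + eᵢ`. -/
abbrev Edge := (ℤ × ℤ) × Fin 3

/-- The three direction vectors `e₁, e₂, e₃`. -/
def dirZ : Fin 3 → ℤ × ℤ := ![(1, 0), (0, 1), (1, 1)]

/-- The three edges of a triangle. -/
def Tri.edges (T : Tri) : Finset Edge :=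
  if T.up then {((T.v.1, T.v.2 + 1), 0), (T.v, 1), (T.v, 2)}
  else {(T.v, 0), ((T.v.1 + 1, T.v.2), 1), (T.v, 2)}

/-- The open segment realizing an edge. -/
def Edge.seg (ε : Edge) : Set Pt :=
  {p | ∃ t : ℝ, 0 < t ∧ t < 1 ∧
    p = ((ε.1.1 : ℝ) + t * ((dirZ ε.2).1 : ℝ), (ε.1.2 : ℝ) + t * ((dirZ ε.2).2 : ℝ))}

/-- `M*`: the union of the closed triangles of a multicell domain. -/
def Mstar (M : Finset Tri) : Set Pt := ⋃ T ∈ M, T.cl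

/-- `ℙ(M,V)`: continuous functions on `M*` whose restriction to each triangle
of `M` is the restriction of a polynomial in `V`. -/
def PP (M : Finset Tri) (V : Set BPoly) : Set (Pt → ℝ) :=
  {f | ContinuousOn f (Mstar M) ∧ ∀ T ∈ M, ∃ q ∈ V, EqOn f (evalP q) T.toSet}

/-- The diamond of an edge: union of the closed triangles of `M` having `ε`
as an edge. -/
def diamond (M : Finset Tri) (ε : Edge) : Set Pt :=
  ⋃ T ∈ M.filter (fun T => ε ∈ T.edges), T.cl

/-- The spline space with edge smoothness `d` on the multicell domain `M`:
piecewise polynomials (pieces from `V`) which are `C^{dᵢ}` on the diamond of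
every edge of type `i` of `M`. -/
def SplineSpace (M : Finset Tri) (V : Set BPoly) (d : Fin 3 → ℕ) : Set (Pt → ℝ) :=
  {f | f ∈ PP M V ∧
    ∀ ε : Edge, (∃ T ∈ M, ε ∈ T.edges) → ContDiffOn ℝ (d ε.2) f (diamond M ε)}

/-- Directional derivative of a polynomial along an integer vector. -/
def dirD (e : ℤ × ℤ) (q : BPoly) : BPoly :=
  (e.1 : ℝ) • MvPolynomial.pderiv (0 : Fin 2) q + (e.2 : ℝ) • MvPolynomial.pderiv (1 : Fin 2) q

/-- The mixed directional derivative operator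
`D_s = (∂_{e₁})^{s₁} (∂_{e₂})^{s₂} (∂_{e₃})^{s₃}`. -/
def Dmix (s : Fin 3 → ℕ) (q : BPoly) : BPoly :=
  (dirD (dirZ 0))^[s 0] ((dirD (dirZ 1))^[s 1] ((dirD (dirZ 2))^[s 2] q))

/-- The index sets `Iᵢ^d`; `I₁^d = {s | s₂+s₃ ≤ d₁}` and cyclically. -/
def Iset (d : Fin 3 → ℕ) (i : Fin 3) : Set (Fin 3 → ℕ) :=
  {s | s (i + 1) + s (i + 2) ≤ d i}

/-- Two triangles of the grid are adjacent if they are distinct and share an edge. -/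
def Adj (T T' : Tri) : Prop := T ≠ T' ∧ ∃ ε : Edge, ε ∈ T.edges ∧ ε ∈ T'.edges

/-- `c` is an edge-connected chain of length `m` from `T` to `T'`. -/
def TriIsChain (T T' : Tri) (m : ℕ) (c : ℕ → Tri) : Prop :=
  c 0 = T ∧ c m = T' ∧ ∀ k < m, Adj (c k) (c (k + 1))

/-- The set of types of the edges crossed by a chain. -/
def chainTypes (m : ℕ) (c : ℕ → Tri) : Set (Fin 3) :=
  {i | ∃ k < m, ∃ ε : Edge, ε.2 = i ∧ ε ∈ (c k).edges ∧ ε ∈ (c (k + 1)).edges}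

/-- Minimal length of an edge-connected chain between two triangles. -/
def minLen (T T' : Tri) : ℕ := sInf {m | ∃ c, TriIsChain T T' m c}

/-- The smoothness type `SmType(△,△')`: the types of the edges crossed by a
shortest edge-connected chain from `△` to `△'`. -/
def SmType (T T' : Tri) : Set (Fin 3) :=
  {i | ∃ c, TriIsChain T T' (minLen T T') c ∧ i ∈ chainTypes (minLen T T') c}

/-- `q` is the polynomial piece of `f` on the triangle `T`. -/
def IsPiece (f : Pt → ℝ) (T : Tri) (q : BPoly) : Prop := EqOn f (evalP q) T.toSet

/-- The strongly regular spline space `Ŝ^d(M,V)`: piecewise polynomials such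
that for any two triangles of `M` with intersecting closures, the derivatives
`D_s`, `s ∈ ⋂_{i ∈ SmType(△,△')} Iᵢ^d`, of the two polynomial pieces agree on the
intersection of the closures (i.e. `D_s f` is continuous there). -/
def StrongSpline (M : Finset Tri) (V : Set BPoly) (d : Fin 3 → ℕ) : Set (Pt → ℝ) :=
  {f | f ∈ PP M V ∧
    ∀ T ∈ M, ∀ T' ∈ M, (T.cl ∩ T'.cl).Nonempty →
      ∀ s : Fin 3 → ℕ, (∀ i ∈ SmType T T', s ∈ Iset d i) →
        ∀ q q' : BPoly, IsPiece f T q → IsPiece f T' q' →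
          ∀ x ∈ T.cl ∩ T'.cl, evalP (Dmix s q) x = evalP (Dmix s q') x}

/-- Kissing triangles: the closures intersect in exactly one point. -/
def Kissing (T T' : Tri) : Prop := ∃ p : Pt, T.cl ∩ T'.cl = {p}

/-- An over-concave vertex of `M`: exactly one triangle of `star(ν)` is
missing from `M`. -/
def OverConcave (M : Finset Tri) (ν : ℤ × ℤ) : Prop :=
  ∃! T : Tri, ν ∈ T.vertices ∧ T ∉ M

/- ## Type-I box splines -/

/-- The Courant hat function `B_{(1,1,1)}`: the piecewise linear function on
`G` supported on `star((1,1))` with value `1` at `(1,1)` and `0` at all other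
lattice points. -/
def hat (p : Pt) : ℝ :=
  max 0 (min (min (min p.1 p.2) (min (2 - p.1) (2 - p.2)))
             (min (1 - (p.1 - p.2)) (1 + (p.1 - p.2))))

/-- The type-I box spline `B_{(n₁,n₂,n₃)}`, defined by repeated directional
convolution starting from the Courant hat function (the result is independent
of the order of the convolutions); junk value `0` if some `nᵢ = 0`. -/
noncomputable def boxN : ℕ → ℕ → ℕ → Pt → ℝ
  | 0, _, _, _ => 0
  | _ + 1, 0, _, _ => 0
  | _ + 1, _ + 1, 0, _ => 0
  | 1, 1, 1, p => hat p
  | a + 2, b + 1, c + 1, p =>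
      ∫ t in (0:ℝ)..1, boxN (a + 1) (b + 1) (c + 1) (p.1 - t, p.2)
  | 1, b + 2, c + 1, p =>
      ∫ t in (0:ℝ)..1, boxN 1 (b + 1) (c + 1) (p.1, p.2 - t)
  | 1, 1, c + 2, p =>
      ∫ t in (0:ℝ)..1, boxN 1 1 (c + 1) (p.1 - t, p.2 - t)
  termination_by a b c _ => a + b + c
  decreasing_by all_goals omega

/-- The translate `B_n(· - w)` of the box spline. -/
def trBox (n₁ n₂ n₃ : ℕ) (w : ℤ × ℤ) (p : Pt) : ℝ :=
  boxN n₁ n₂ n₃ (p.1 - (w.1 : ℝ), p.2 - (w.2 : ℝ))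

/-- `Supp_n(△̂)`: lattice translates of `B_n` that do not vanish identically
on the triangle `T`. -/
def activeSet (n₁ n₂ n₃ : ℕ) (T : Tri) : Set (ℤ × ℤ) :=
  {w | ¬ ∀ p ∈ T.toSet, trBox n₁ n₂ n₃ w p = 0}

/-- `c` is the coefficient vector of the polynomial `q` with respect to the
active box-spline translates on `T`:  `q|_T = Σ_β λ_T^β(q)·β|_T`. -/
def Represents (n₁ n₂ n₃ : ℕ) (T : Tri) (q : BPoly) (c : (ℤ × ℤ) →₀ ℝ) : Prop :=
  ↑c.support ⊆ activeSet n₁ n₂ n₃ T ∧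
    ∀ p ∈ T.toSet, evalP q p = c.sum fun w a => a * trBox n₁ n₂ n₃ w p

/-- `V_n` (relative to the triangle `T`): polynomials whose restriction to `T`
is a linear combination of the active box-spline translates on `T`. -/
def VSpace (n₁ n₂ n₃ : ℕ) (T : Tri) : Set BPoly :=
  {q | ∃ c, Represents n₁ n₂ n₃ T q c}

/-!
Let `T` be the truncated power of the directions `e₁, e₂, e₃` with multiplicities `n₁, n₂, n₃`
(the cone spline): differentiating it along `eᵢ` lowers `nᵢ` by one. Averaging along `eᵢ` is
therefore, by the fundamental theorem of calculus, a backward difference of the cone spline with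
`nᵢ` raised by one, so that `B_n` is a finite linear combination of lattice translates of `T`. All
three claims are stable under linear combinations and lattice translations, and it suffices to
prove them for `T`.

Global smoothness of `T` follows by induction on the order, since two independent directional
derivatives of class `C^r` make a function of class `C^{r+1}`. On each side of the diagonal, `T` is
an explicit sum of products of a polynomial in `x - y` and a truncated power of a single coordinate,
which gives the polynomial pieces and the smoothness across edges of types 1 and 2. Across an edge
of type 3 off the diagonal `T` is a polynomial; near one on the diagonal the truncated powers are
either zero or ordinary powers, and for ordinary powers the induction on directional derivatives
ends in the case of a polynomial, so `n₃` imposes no restriction.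
-/

section DirectionalDerivatives

variable {E₁ E₂ E F : Type*} [NormedAddCommGroup E₁] [NormedSpace ℝ E₁] [NormedAddCommGroup E₂]
  [NormedSpace ℝ E₂] [NormedAddCommGroup E] [NormedSpace ℝ E] [NormedAddCommGroup F]
  [NormedSpace ℝ F]

lemma contDiff_succ_of_hasFDerivAt_partial {k : ℕ} {f : E₁ × E₂ → F}
    {f₁ : E₁ × E₂ → E₁ →L[ℝ] F} {f₂ : E₁ × E₂ → E₂ →L[ℝ] F}
    (hf₁ : ∀ p, HasFDerivAt (fun x => f (x, p.2)) (f₁ p) p.1)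
    (hf₂ : ∀ p, HasFDerivAt (fun y => f (p.1, y)) (f₂ p) p.2)
    (hk₁ : ContDiff ℝ k f₁) (hk₂ : ContDiff ℝ k f₂) : ContDiff ℝ (k + 1) f := by
  refine contDiff_succ_iff_hasFDerivAt.2 ⟨fun p => (f₁ p).coprod (f₂ p), ?_, fun p => ?_⟩
  · have coprod_eq (p : E₁ × E₂) : (f₁ p).coprod (f₂ p) =
        (f₁ p).comp (.fst ℝ E₁ E₂) + (f₂ p).comp (.snd ℝ E₁ E₂) := by
      ext <;> simp
    simp only [coprod_eq]
    exact (hk₁.clm_comp contDiff_const).add (hk₂.clm_comp contDiff_const)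
  · exact (hasStrictFDerivAt_uncurry_coprod (f := fun x y => f (x, y))
      (f₁ := fun x y => f₁ (x, y)) (f₂ := fun x y => f₂ (x, y))
      (.of_forall hf₁) (.of_forall hf₂)
      hk₁.continuous.continuousAt hk₂.continuous.continuousAt).hasFDerivAt

lemma hasDerivAt_add_smul_iff {f : E → F} {f' : F} {p v : E} {s : ℝ} :
    HasDerivAt (fun t : ℝ => f (p + t • v)) f' s ↔ HasLineDerivAt ℝ f f' (p + s • v) v := by
  constructor <;> intro h
  · have h' := HasDerivAt.comp_const_add (f := fun t : ℝ => f (p + t • v)) s 0 (by simpa using h)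
    simpa only [HasLineDerivAt, add_smul, add_assoc] using h'
  · have h' := HasDerivAt.comp_sub_const (f := fun t : ℝ => f (p + s • v + t • v)) s s
      (by simpa [HasLineDerivAt] using h)
    simpa only [add_assoc, ← add_smul, add_sub_cancel] using h'

lemma hasLineDerivAt_one_zero_iff {f : ℝ × ℝ → F} {f' : F} {x y : ℝ} :
    HasLineDerivAt ℝ f f' (x, y) (1, 0) ↔ HasDerivAt (fun s => f (s, y)) f' x := by
  simpa using (hasDerivAt_add_smul_iff (f := f) (f' := f') (p := (0, y)) (v := (1, 0))
    (s := x)).symm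

lemma contDiff_succ_of_hasLineDerivAt (hE : Module.finrank ℝ E = 2) {u v : E}
    (huv : LinearIndependent ℝ ![u, v]) {k : ℕ} {f fu fv : E → F}
    (hfu : ∀ p, HasLineDerivAt ℝ f (fu p) p u) (hfv : ∀ p, HasLineDerivAt ℝ f (fv p) p v)
    (hku : ContDiff ℝ k fu) (hkv : ContDiff ℝ k fv) : ContDiff ℝ (k + 1) f := by
  let b := basisOfLinearIndependentOfCardEqFinrank huv (by simp [hE])
  have : FiniteDimensional ℝ E := b.finiteDimensional_of_finite
  let L : (ℝ × ℝ) ≃L[ℝ] E :=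
    (ContinuousLinearEquiv.finTwoArrow ℝ ℝ).symm.trans b.equivFunL.symm
  have L_apply (p : ℝ × ℝ) : L p = p.1 • u + p.2 • v := by
    change b.equivFun.symm ![p.1, p.2] = _
    simp [b, Module.Basis.equivFun_symm_apply, Fin.sum_univ_two]
  have hasDerivAt_fst (p : ℝ × ℝ) : HasDerivAt (fun x => f (L (x, p.2))) (fu (L p)) p.1 := by
    simp only [L_apply, add_comm _ (p.2 • v)]
    exact hasDerivAt_add_smul_iff.2 (hfu _)
  have hasDerivAt_snd (p : ℝ × ℝ) : HasDerivAt (fun y => f (L (p.1, y))) (fv (L p)) p.2 := by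
    simp only [L_apply]
    exact hasDerivAt_add_smul_iff.2 (hfv _)
  have contDiff_toSpanSingleton {g : E → F} (hg : ContDiff ℝ k g) :
      ContDiff ℝ k fun p => ContinuousLinearMap.toSpanSingleton ℝ (g (L p)) :=
    (ContinuousLinearMap.toSpanSingletonCLE (𝕜 := ℝ) (E := F)).contDiff.comp (hg.comp L.contDiff)
  exact L.contDiff_comp_iff.1 <|
    contDiff_succ_of_hasFDerivAt_partial (f := f ∘ L) (fun p => (hasDerivAt_fst p).hasFDerivAt)
      (fun p => (hasDerivAt_snd p).hasFDerivAt)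
      (contDiff_toSpanSingleton hku) (contDiff_toSpanSingleton hkv)

lemma hasDerivAt_ite_le {f g : ℝ → F} {f' g' : F} {a x : ℝ} (hf : HasDerivAt f f' x)
    (hg : HasDerivAt g g' x) (hfg : f a = g a) (hfg' : x = a → f' = g') :
    HasDerivAt (fun s => if a ≤ s then f s else g s) (if a ≤ x then f' else g') x := by
  rcases lt_trichotomy x a with hxa | rfl | hax
  · rw [if_neg hxa.not_ge]
    exact hg.congr_of_eventuallyEq <|
      (gt_mem_nhds hxa).mono fun s (hs : s < a) => if_neg hs.not_ge
  · have on_right : HasDerivWithinAt (fun s => if x ≤ s then f s else g s) f' (Ici x) x :=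
      hf.hasDerivWithinAt.congr (fun s hs => if_pos hs) (if_pos le_rfl)
    have on_left : HasDerivWithinAt (fun s => if x ≤ s then f s else g s) f' (Iio x) x :=
      (hfg' rfl ▸ hg).hasDerivWithinAt.congr (fun s hs => if_neg (not_le.2 hs)) (by simp [hfg])
    simpa only [if_pos le_rfl, Ici_union_Iio, hasDerivWithinAt_univ] using on_right.union on_left
  · rw [if_pos hax.le]
    exact hf.congr_of_eventuallyEq <|
      (lt_mem_nhds hax).mono fun s (hs : a < s) => if_pos hs.le

end DirectionalDerivatives

section AntiderivativeSequences

open Finset.HasAntidiagonal (antidiagonal mem_antidiagonal)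

/-- The divided power `z ^ k / k!`. -/
def divPow (k : ℕ) (z : ℝ) : ℝ := z ^ k / k.factorial

/-- The truncated divided power `z₊ ^ (k + 1) / (k + 1)!`; the exponent is shifted so that the
sequence starts with a continuous function. -/
def truncPow (k : ℕ) (z : ℝ) : ℝ := divPow (k + 1) (max z 0)

/-- A sequence of functions on the line, each term an antiderivative of the preceding one. -/
structure IsAntiderivSeq (φ : ℕ → ℝ → ℝ) : Prop where
  continuous_zero : Continuous (φ 0)
  hasDerivAt (k : ℕ) (z : ℝ) : HasDerivAt (φ (k + 1)) (φ k z) z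

variable {φ : ℕ → ℝ → ℝ} {k : ℕ} {z : ℝ}

lemma IsAntiderivSeq.contDiff (hφ : IsAntiderivSeq φ) : ∀ k : ℕ, ContDiff ℝ k (φ k)
  | 0 => contDiff_zero.2 hφ.continuous_zero
  | k + 1 => contDiff_succ_iff_deriv.2 ⟨fun z => (hφ.hasDerivAt k z).differentiableAt, by simp,
      (funext fun z => (hφ.hasDerivAt k z).deriv) ▸ hφ.contDiff k⟩

@[simp] lemma divPow_zero (z : ℝ) : divPow 0 z = 1 := by simp [divPow]

lemma divPow_succ_zero (k : ℕ) : divPow (k + 1) 0 = 0 := by simp [divPow]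

lemma hasDerivAt_divPow (k : ℕ) (z : ℝ) : HasDerivAt (divPow (k + 1)) (divPow k z) z := by
  refine ((hasDerivAt_pow (k + 1) z).div_const _).congr_deriv ?_
  rw [divPow, Nat.factorial_succ, Nat.add_sub_cancel]
  push_cast
  field_simp

@[fun_prop] lemma contDiff_divPow (k : ℕ) {n : WithTop ℕ∞} : ContDiff ℝ n (divPow k) :=
  (contDiff_id.pow k).div_const _

@[fun_prop] lemma continuous_divPow (k : ℕ) : Continuous (divPow k) :=
  (contDiff_divPow k (n := 0)).continuous

lemma isAntiderivSeq_divPow : IsAntiderivSeq divPow where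
  continuous_zero := continuous_divPow 0
  hasDerivAt := hasDerivAt_divPow

lemma divPow_add (n : ℕ) (x y : ℝ) :
    divPow n (x + y) = ∑ ij ∈ antidiagonal n, divPow ij.1 x * divPow ij.2 y := by
  rw [divPow, (Commute.all x y).add_pow', Finset.sum_div]
  refine Finset.sum_congr rfl fun ij hij => ?_
  obtain rfl := mem_antidiagonal.1 hij
  rw [nsmul_eq_mul, divPow, divPow, ← Nat.add_choose_mul_factorial_mul_factorial,
    Nat.choose_symm_add]
  have : ((ij.1 + ij.2).choose ij.2 : ℝ) ≠ 0 := by exact_mod_cast (Nat.choose_pos (by omega)).ne'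
  push_cast
  field_simp

lemma choose_mul_divPow_add (B j : ℕ) (z : ℝ) :
    (B + j).choose j * divPow (B + j) z = divPow B z * divPow j z := by
  rw [divPow, divPow, divPow, ← Nat.add_choose_mul_factorial_mul_factorial]
  have : ((B + j).choose j : ℝ) ≠ 0 := by exact_mod_cast (Nat.choose_pos (by omega)).ne'
  push_cast
  field_simp
  ring

lemma truncPow_of_nonneg (hz : 0 ≤ z) : truncPow k z = divPow (k + 1) z := by
  rw [truncPow, max_eq_left hz]

lemma truncPow_of_nonpos (hz : z ≤ 0) : truncPow k z = 0 := by
  rw [truncPow, max_eq_right hz, divPow_succ_zero]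

lemma isAntiderivSeq_truncPow : IsAntiderivSeq truncPow where
  continuous_zero := (continuous_divPow 1).comp (continuous_id.max continuous_const)
  hasDerivAt k z := by
    have truncPow_eq_ite (k : ℕ) :
        truncPow k = fun z => if 0 ≤ z then divPow (k + 1) z else 0 := by
      ext z
      split_ifs with hz
      · exact truncPow_of_nonneg hz
      · exact truncPow_of_nonpos (not_le.1 hz).le
    simp only [truncPow_eq_ite]
    refine hasDerivAt_ite_le (hasDerivAt_divPow (k + 1) z) (hasDerivAt_const z 0)
      (divPow_succ_zero _) ?_
    rintro rfl
    exact divPow_succ_zero k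

end AntiderivativeSequences

section ConeSpline

open Finset.HasAntidiagonal (antidiagonal)

/-- The closed form, on the half-plane `y ≤ x`, of the truncated power with directions `(1, 0)`,
`(0, 1)`, `(1, 1)` of multiplicities `A + 1`, `B + 1`, `k - B + 1`. For `φ = truncPow` it is
`∫ s ≤ y, (x - s)^A / A! * (y - s)^B / B! * s₊^(k - B) / (k - B)!`, expanded by means of
`x - s = (x - y) + (y - s)`. -/
def conePiece (φ : ℕ → ℝ → ℝ) (A B k : ℕ) (x y : ℝ) : ℝ :=
  ∑ ij ∈ antidiagonal A, (B + ij.2).choose ij.2 * divPow ij.1 (x - y) * φ (k + ij.2) y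

/-- The truncated power of the three directions `(1, 0)`, `(0, 1)`, `(1, 1)`, taken with
multiplicities `A + 1`, `B + 1`, `C + 1` when `φ = truncPow`. Differentiation along a direction
lowers its index by one. -/
def coneSpline (φ : ℕ → ℝ → ℝ) (A B C : ℕ) (p : Pt) : ℝ :=
  if p.2 ≤ p.1 then conePiece φ A B (B + C) p.1 p.2 else conePiece φ B A (A + C) p.2 p.1

variable {φ : ℕ → ℝ → ℝ} {A B C k : ℕ} {x y : ℝ}

lemma conePiece_zero : conePiece φ 0 B k x y = φ k y := by simp [conePiece]

lemma conePiece_self (φ : ℕ → ℝ → ℝ) (A B k : ℕ) (x : ℝ) :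
    conePiece φ A B k x x = (B + A).choose A * φ (k + A) x := by
  rw [conePiece, Finset.sum_eq_single_of_mem (0, A) (by simp)]
  · simp
  · rintro ⟨_ | i, j⟩ hij hne
    · exact absurd (by simpa using hij) (by simpa using hne)
    · simp [divPow_succ_zero]

lemma conePiece_self_comm (φ : ℕ → ℝ → ℝ) (A B C : ℕ) (x : ℝ) :
    conePiece φ A B (B + C) x x = conePiece φ B A (A + C) x x := by
  rw [conePiece_self, conePiece_self, add_comm B A, Nat.choose_symm_add,
    show B + C + A = A + C + B by ring]

lemma conePiece_succ_succ (φ : ℕ → ℝ → ℝ) (A B k : ℕ) (x y : ℝ) :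
    conePiece φ (A + 1) (B + 1) k x y =
      conePiece φ (A + 1) B k x y + conePiece φ A (B + 1) (k + 1) x y := by
  simp only [conePiece, Finset.Nat.sum_antidiagonal_succ', add_zero, Nat.choose_zero_right]
  rw [add_assoc, ← Finset.sum_add_distrib]
  congr 1
  refine Finset.sum_congr rfl fun ij _ => ?_
  rw [show B + 1 + (ij.2 + 1) = B + (ij.2 + 1) + 1 by ring, Nat.choose_succ_succ,
    show B + (ij.2 + 1) = B + 1 + ij.2 by ring, show k + (ij.2 + 1) = k + 1 + ij.2 by ring]
  push_cast
  ring

lemma conePiece_divPow_self (A B : ℕ) (x y : ℝ) :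
    conePiece divPow A B B x y = divPow A x * divPow B y := by
  conv_rhs => rw [← sub_add_cancel x y, divPow_add, Finset.sum_mul]
  refine Finset.sum_congr rfl fun ij _ => ?_
  rw [mul_right_comm, choose_mul_divPow_add]
  ring

lemma hasDerivAt_conePiece_fst (φ : ℕ → ℝ → ℝ) (A B k : ℕ) (x y : ℝ) :
    HasDerivAt (fun s => conePiece φ (A + 1) B k s y) (conePiece φ A B k x y) x := by
  simp only [conePiece, Finset.Nat.sum_antidiagonal_succ, divPow_zero]
  refine HasDerivAt.const_add _ (HasDerivAt.fun_sum fun ij _ => ?_)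
  exact (((hasDerivAt_divPow ij.1 (x - y)).comp_sub_const x y).const_mul _).mul_const _

lemma hasDerivAt_conePiece_diagonal (hφ : IsAntiderivSeq φ) (A B k : ℕ) (x y t : ℝ) :
    HasDerivAt (fun t => conePiece φ A B (k + 1) (x + t) (y + t))
      (conePiece φ A B k (x + t) (y + t)) t := by
  simp only [conePiece, add_sub_add_right_eq_sub]
  refine HasDerivAt.fun_sum fun ij _ => HasDerivAt.const_mul _ ?_
  rw [add_right_comm]
  exact (hφ.hasDerivAt _ _).comp_const_add y t

lemma hasDerivAt_conePiece_snd (hφ : IsAntiderivSeq φ) :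
    ∀ (A B k : ℕ) (x y : ℝ),
      HasDerivAt (fun s => conePiece φ A (B + 1) (k + 1) x s) (conePiece φ A B k x y) y
  | 0, B, k, x, y => by simpa only [conePiece_zero] using hφ.hasDerivAt k y
  | A + 1, B, k, x, y => by
    have product_rule : HasDerivAt (fun s => conePiece φ (A + 1) (B + 1) (k + 1) x s)
        (conePiece φ (A + 1) (B + 1) k x y - conePiece φ A (B + 1) (k + 1) x y) y := by
      have hasDerivAt_phi (j : ℕ) : HasDerivAt (φ (k + 1 + j)) (φ (k + j) y) y := by
        simpa only [add_right_comm] using hφ.hasDerivAt (k + j) y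
      simp only [conePiece, Finset.Nat.sum_antidiagonal_succ, add_sub_assoc,
        ← Finset.sum_sub_distrib, divPow_zero]
      refine ((hasDerivAt_phi _).const_mul _).add (HasDerivAt.fun_sum fun ij _ => ?_)
      refine ((((hasDerivAt_divPow ij.1 (x - y)).comp_const_sub x y).const_mul _).mul
        (hasDerivAt_phi ij.2)).congr_deriv ?_
      ring
    rwa [conePiece_succ_succ, add_sub_cancel_right] at product_rule

lemma contDiff_conePiece (hφ : IsAntiderivSeq φ) (A B k : ℕ) :
    ContDiff ℝ k fun p : Pt => conePiece φ A B k p.1 p.2 := by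
  refine ContDiff.sum fun ij _ => ContDiff.mul (by fun_prop) ?_
  exact ((hφ.contDiff (k + ij.2)).of_le (by exact_mod_cast Nat.le_add_right k ij.2)).comp
    contDiff_snd

lemma coneSpline_of_le (h : y ≤ x) : coneSpline φ A B C (x, y) = conePiece φ A B (B + C) x y :=
  if_pos h

lemma coneSpline_swap (φ : ℕ → ℝ → ℝ) (A B C : ℕ) (p : Pt) :
    coneSpline φ A B C p.swap = coneSpline φ B A C p := by
  rcases lt_trichotomy p.1 p.2 with h | h | h
  · simp [coneSpline, h.le, h.not_ge]
  · simp [coneSpline, h, conePiece_self_comm]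
  · simp [coneSpline, h.le, h.not_ge]

lemma coneSpline_of_ge (h : x ≤ y) : coneSpline φ A B C (x, y) = conePiece φ B A (A + C) y x := by
  rw [← coneSpline_of_le h, ← coneSpline_swap, Prod.swap_prod_mk]

lemma continuous_coneSpline (hφ : IsAntiderivSeq φ) (A B C : ℕ) :
    Continuous (coneSpline φ A B C) := by
  refine Continuous.if_le (contDiff_conePiece hφ A B _).continuous
    ((contDiff_conePiece hφ B A _).continuous.comp continuous_swap) continuous_snd continuous_fst
    fun p hp => ?_
  rw [hp]
  exact conePiece_self_comm φ A B C p.1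

lemma hasLineDerivAt_coneSpline_e₁ (hφ : IsAntiderivSeq φ) (A B C : ℕ) (p : Pt) :
    HasLineDerivAt ℝ (coneSpline φ (A + 1) B C) (coneSpline φ A B C p) p (1, 0) := by
  refine hasLineDerivAt_one_zero_iff.2 (hasDerivAt_ite_le
    (hasDerivAt_conePiece_fst φ A B (B + C) p.1 p.2) ?_ (conePiece_self_comm φ (A + 1) B C p.2) ?_)
  · rw [add_right_comm]
    exact hasDerivAt_conePiece_snd hφ B A (A + C) p.2 p.1
  · intro hp
    rw [hp]
    exact conePiece_self_comm φ A B C p.2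

lemma hasLineDerivAt_coneSpline_e₂ (hφ : IsAntiderivSeq φ) (A B C : ℕ) (p : Pt) :
    HasLineDerivAt ℝ (coneSpline φ A (B + 1) C) (coneSpline φ A B C p) p (0, 1) := by
  have h := hasLineDerivAt_coneSpline_e₁ hφ B A C p.swap
  simpa only [HasLineDerivAt, ← coneSpline_swap φ A, Prod.swap_swap, Prod.swap_add,
    Prod.smul_swap, Prod.swap_prod_mk] using h

lemma hasLineDerivAt_coneSpline_e₃ (hφ : IsAntiderivSeq φ) (A B C : ℕ) (p : Pt) :
    HasLineDerivAt ℝ (coneSpline φ A B (C + 1)) (coneSpline φ A B C p) p (1, 1) := by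
  simp only [HasLineDerivAt, coneSpline, Prod.fst_add, Prod.snd_add, Prod.smul_fst,
    Prod.smul_snd, smul_eq_mul, mul_one, add_le_add_iff_right, ← add_assoc]
  split_ifs
  · simpa using hasDerivAt_conePiece_diagonal hφ A B (B + C) p.1 p.2 0
  · simpa using hasDerivAt_conePiece_diagonal hφ B A (A + C) p.2 p.1 0

lemma linearIndependent_e₁_e₂ : LinearIndependent ℝ ![((1, 0) : Pt), (0, 1)] :=
  LinearIndependent.pair_iff.2 fun s t h => by simpa using h

lemma linearIndependent_e₁_e₃ : LinearIndependent ℝ ![((1, 0) : Pt), (1, 1)] :=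
  LinearIndependent.pair_iff.2 fun s t h => by
    have : s + t = 0 ∧ t = 0 := by simpa using h
    constructor <;> linarith

lemma linearIndependent_e₂_e₃ : LinearIndependent ℝ ![((0, 1) : Pt), (1, 1)] :=
  LinearIndependent.pair_iff.2 fun s t h => by
    have : t = 0 ∧ s + t = 0 := by simpa using h
    constructor <;> linarith

lemma contDiff_coneSpline (hφ : IsAntiderivSeq φ) {r A B C : ℕ} (hAB : r ≤ A + B)
    (hAC : r ≤ A + C) (hBC : r ≤ B + C) : ContDiff ℝ r (coneSpline φ A B C) := by
  have finrank_Pt : Module.finrank ℝ Pt = 2 := by simp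
  induction r generalizing A B C with
  | zero => exact contDiff_zero.2 (continuous_coneSpline hφ A B C)
  | succ r ih =>
    have e₁ := hasLineDerivAt_coneSpline_e₁ hφ
    have e₂ := hasLineDerivAt_coneSpline_e₂ hφ
    have e₃ := hasLineDerivAt_coneSpline_e₃ hφ
    match A, B, C with
    | A + 1, B + 1, C =>
      exact contDiff_succ_of_hasLineDerivAt finrank_Pt linearIndependent_e₁_e₂
        (e₁ A (B + 1) C) (e₂ (A + 1) B C) (ih (by omega) (by omega) (by omega))
        (ih (by omega) (by omega) (by omega))
    | A + 1, 0, C + 1 =>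
      exact contDiff_succ_of_hasLineDerivAt finrank_Pt linearIndependent_e₁_e₃
        (e₁ A 0 (C + 1)) (e₃ (A + 1) 0 C) (ih (by omega) (by omega) (by omega))
        (ih (by omega) (by omega) (by omega))
    | 0, B + 1, C + 1 =>
      exact contDiff_succ_of_hasLineDerivAt finrank_Pt linearIndependent_e₂_e₃
        (e₂ 0 B (C + 1)) (e₃ 0 (B + 1) C) (ih (by omega) (by omega) (by omega))
        (ih (by omega) (by omega) (by omega))

lemma coneSpline_divPow_zero (A B : ℕ) :
    coneSpline divPow A B 0 = fun p => divPow A p.1 * divPow B p.2 := by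
  ext p
  rw [coneSpline, add_zero, add_zero, conePiece_divPow_self, conePiece_divPow_self,
    mul_comm (divPow B p.2), ite_self]

lemma contDiff_coneSpline_divPow {r A B : ℕ} (hAB : r ≤ A + B) (C : ℕ) :
    ContDiff ℝ r (coneSpline divPow A B C) := by
  have finrank_Pt : Module.finrank ℝ Pt = 2 := by simp
  induction r generalizing A B C with
  | zero => exact contDiff_zero.2 (continuous_coneSpline isAntiderivSeq_divPow A B C)
  | succ r ih =>
    have e₁ := hasLineDerivAt_coneSpline_e₁ isAntiderivSeq_divPow
    have e₂ := hasLineDerivAt_coneSpline_e₂ isAntiderivSeq_divPow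
    have e₃ := hasLineDerivAt_coneSpline_e₃ isAntiderivSeq_divPow
    match A, B, C with
    | A, B, 0 =>
      rw [coneSpline_divPow_zero]
      fun_prop
    | A + 1, B, C + 1 =>
      exact contDiff_succ_of_hasLineDerivAt finrank_Pt linearIndependent_e₁_e₃
        (e₁ A B (C + 1)) (e₃ (A + 1) B C) (ih (by omega) _) (ih (by omega) _)
    | 0, B + 1, C + 1 =>
      exact contDiff_succ_of_hasLineDerivAt finrank_Pt linearIndependent_e₂_e₃
        (e₂ 0 B (C + 1)) (e₃ 0 (B + 1) C) (ih (by omega) _) (ih (by omega) _)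

end ConeSpline

section TranslateSpan

open scoped translate

variable {E : Type*}

/-- The finite linear combinations of the translates of `f` by elements of `Λ`. -/
def translateSpan [AddCommGroup E] (Λ : AddSubgroup E) (f : E → ℝ) : Submodule ℝ (E → ℝ) :=
  Submodule.span ℝ ((fun w => τ w f) '' Λ)

lemma translate_mem_translateSpan [AddCommGroup E] {Λ : AddSubgroup E} {w : E} (hw : w ∈ Λ)
    (f : E → ℝ) : τ w f ∈ translateSpan Λ f :=
  Submodule.subset_span (mem_image_of_mem _ hw)

lemma mem_of_mem_translateSpan [AddCommGroup E] {Λ : AddSubgroup E} {f g : E → ℝ}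
    {W : Submodule ℝ (E → ℝ)} (hg : g ∈ translateSpan Λ f) (hf : f ∈ W)
    (hW : ∀ w ∈ Λ, ∀ h ∈ W, τ w h ∈ W) : g ∈ W :=
  Submodule.span_le.2 (image_subset_iff.2 fun w hw => hW w hw f hf) hg

variable [NormedAddCommGroup E] [NormedSpace ℝ E] {Λ : AddSubgroup E} {f g F : E → ℝ} {v : E}

/-- The real-valued functions of class `C^n`, as a vector space. -/
def contDiffSubmodule (E : Type*) [NormedAddCommGroup E] [NormedSpace ℝ E]
    (n : WithTop ℕ∞) : Submodule ℝ (E → ℝ) where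
  carrier := {f | ContDiff ℝ n f}
  add_mem' {_ _} (hf : ContDiff ℝ n _) (hg : ContDiff ℝ n _) := hf.add hg
  zero_mem' := (contDiff_const : ContDiff ℝ n fun _ => (0 : ℝ))
  smul_mem' c _ (hf : ContDiff ℝ n _) := hf.const_smul c

lemma mem_contDiffSubmodule {n : WithTop ℕ∞} : f ∈ contDiffSubmodule E n ↔ ContDiff ℝ n f :=
  Iff.rfl

lemma contDiff_translate {n : WithTop ℕ∞} (hf : ContDiff ℝ n f) (w : E) : ContDiff ℝ n (τ w f) :=
  hf.comp (contDiff_id.sub contDiff_const)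

lemma contDiff_of_mem_translateSpan {n : WithTop ℕ∞} (hg : g ∈ translateSpan Λ f)
    (hf : ContDiff ℝ n f) : ContDiff ℝ n g :=
  mem_of_mem_translateSpan (W := contDiffSubmodule E n) hg hf
    fun w _ _ hh => contDiff_translate hh w

/-- The average of `f` over the unit segment pointing from a point in the direction `-v`, that is,
the convolution of `f` with the uniform measure on the segment from `0` to `v`. -/
def segmentAverage (v : E) (f : E → ℝ) (p : E) : ℝ := ∫ t in (0 : ℝ)..1, f (p - t • v)

lemma segmentAverage_translate (v w : E) (f : E → ℝ) :
    segmentAverage v (τ w f) = τ w (segmentAverage v f) := by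
  ext p
  simp only [segmentAverage, translate_apply, sub_right_comm]

lemma intervalIntegrable_segment (hf : Continuous f) (v p : E) :
    IntervalIntegrable (fun t : ℝ => f (p - t • v)) MeasureTheory.volume 0 1 :=
  (hf.comp (by fun_prop)).intervalIntegrable 0 1

lemma segmentAverage_add (v : E) (hf : Continuous f) (hg : Continuous g) :
    segmentAverage v (f + g) = segmentAverage v f + segmentAverage v g := by
  ext p
  exact intervalIntegral.integral_add (intervalIntegrable_segment hf v p)
    (intervalIntegrable_segment hg v p)

lemma segmentAverage_smul (v : E) (c : ℝ) (f : E → ℝ) :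
    segmentAverage v (c • f) = c • segmentAverage v f := by
  ext p
  exact intervalIntegral.integral_const_mul c _

lemma segmentAverage_eq_sub_translate (hf : Continuous f)
    (hF : ∀ p, HasLineDerivAt ℝ F (f p) p v) : segmentAverage v f = F - τ v F := by
  ext p
  have hasDerivAt_line (t : ℝ) :
      HasDerivAt (fun t : ℝ => -F (p - t • v)) (f (p - t • v)) t := by
    have h := (hasDerivAt_add_smul_iff.2 (hF (p + (-t) • v))).scomp t (hasDerivAt_neg t)
    simpa [Function.comp_def, ← sub_eq_add_neg] using h.fun_neg
  rw [segmentAverage, intervalIntegral.integral_eq_sub_of_hasDerivAt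
    (fun t _ => hasDerivAt_line t) (intervalIntegrable_segment hf v p)]
  simp only [Pi.sub_apply, translate_apply, one_smul, zero_smul, sub_zero]
  ring

lemma segmentAverage_mem_translateSpan (hg : g ∈ translateSpan Λ f) (hf : Continuous f)
    (hv : v ∈ Λ) (hF : ∀ p, HasLineDerivAt ℝ F (f p) p v) :
    segmentAverage v g ∈ translateSpan Λ F := by
  have continuous_of_mem {h : E → ℝ} (hh : h ∈ translateSpan Λ f) : Continuous h :=
    contDiff_zero.1 (contDiff_of_mem_translateSpan (n := 0) hh (contDiff_zero.2 hf))
  induction hg using Submodule.span_induction with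
  | mem _ hw =>
    obtain ⟨w, hw, rfl⟩ := hw
    rw [segmentAverage_translate, segmentAverage_eq_sub_translate hf hF, translate_sub_right,
      translate_translate]
    exact sub_mem (translate_mem_translateSpan hw F)
      (translate_mem_translateSpan (add_mem hw hv) F)
  | zero =>
    rw [show segmentAverage v (0 : E → ℝ) = 0 by ext; simp [segmentAverage]]
    exact zero_mem _
  | add _ _ hg hh ihg ihh =>
    rw [segmentAverage_add v (continuous_of_mem hg) (continuous_of_mem hh)]
    exact add_mem ihg ihh
  | smul c _ _ ih =>
    rw [segmentAverage_smul]
    exact Submodule.smul_mem _ c ih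

end TranslateSpan

section BoxSpline

open scoped translate

/-- The embedding of the vertices of the grid into the plane. -/
def latticePt : ℤ × ℤ →+ Pt := (Int.castAddHom ℝ).prodMap (Int.castAddHom ℝ)

@[simp] lemma latticePt_apply (w : ℤ × ℤ) : latticePt w = ((w.1 : ℝ), (w.2 : ℝ)) := rfl

lemma coneSpline_truncPow_zero (p : Pt) :
    coneSpline truncPow 0 0 0 p = max (min p.1 p.2) 0 := by
  rcases le_total p.2 p.1 with h | h
  · rw [coneSpline_of_le h, conePiece_zero, min_eq_right h]
    simp [truncPow, divPow]
  · rw [coneSpline_of_ge h, conePiece_zero, min_eq_left h]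
    simp [truncPow, divPow]

lemma hat_eq_sum_max_min (p : Pt) :
    hat p = max (min p.1 p.2) 0 - max (min (p.1 - 1) p.2) 0 - max (min p.1 (p.2 - 1)) 0
      + max (min (p.1 - 2) (p.2 - 1)) 0 + max (min (p.1 - 1) (p.2 - 2)) 0
      - max (min (p.1 - 2) (p.2 - 2)) 0 := by
  unfold hat
  grind

lemma hat_mem_translateSpan : hat ∈ translateSpan latticePt.range (coneSpline truncPow 0 0 0) := by
  set f := coneSpline truncPow 0 0 0
  have hat_eq_sum_translate : hat = τ (latticePt (0, 0)) f - τ (latticePt (1, 0)) f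
      - τ (latticePt (0, 1)) f + τ (latticePt (2, 1)) f + τ (latticePt (1, 2)) f
      - τ (latticePt (2, 2)) f := by
    ext p
    simp [f, coneSpline_truncPow_zero, hat_eq_sum_max_min]
  have translate_mem (w : ℤ × ℤ) : τ (latticePt w) f ∈ translateSpan latticePt.range f :=
    translate_mem_translateSpan (AddMonoidHom.mem_range.2 ⟨w, rfl⟩) f
  rw [hat_eq_sum_translate]
  exact sub_mem (add_mem (add_mem (sub_mem (sub_mem (translate_mem _) (translate_mem _))
    (translate_mem _)) (translate_mem _)) (translate_mem _)) (translate_mem _)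

lemma boxN_eq_segmentAverage_e₁ (a b c : ℕ) :
    boxN (a + 2) (b + 1) (c + 1) = segmentAverage (1, 0) (boxN (a + 1) (b + 1) (c + 1)) := by
  ext ⟨x, y⟩
  rw [boxN]
  simp [segmentAverage]

lemma boxN_eq_segmentAverage_e₂ (b c : ℕ) :
    boxN 1 (b + 2) (c + 1) = segmentAverage (0, 1) (boxN 1 (b + 1) (c + 1)) := by
  ext ⟨x, y⟩
  rw [boxN]
  simp [segmentAverage]

lemma boxN_eq_segmentAverage_e₃ (c : ℕ) :
    boxN 1 1 (c + 2) = segmentAverage (1, 1) (boxN 1 1 (c + 1)) := by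
  ext ⟨x, y⟩
  rw [boxN]
  simp [segmentAverage]

lemma boxN_mem_translateSpan (A B C : ℕ) :
    boxN (A + 1) (B + 1) (C + 1) ∈ translateSpan latticePt.range (coneSpline truncPow A B C) := by
  have continuous_cone := continuous_coneSpline isAntiderivSeq_truncPow
  induction A with
  | succ A ih =>
    rw [boxN_eq_segmentAverage_e₁]
    exact segmentAverage_mem_translateSpan ih (continuous_cone A B C) ⟨(1, 0), by simp⟩
      (hasLineDerivAt_coneSpline_e₁ isAntiderivSeq_truncPow A B C)
  | zero => induction B with
    | succ B ih =>
      rw [boxN_eq_segmentAverage_e₂]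
      exact segmentAverage_mem_translateSpan ih (continuous_cone 0 B C) ⟨(0, 1), by simp⟩
        (hasLineDerivAt_coneSpline_e₂ isAntiderivSeq_truncPow 0 B C)
    | zero => induction C with
      | succ C ih =>
        rw [boxN_eq_segmentAverage_e₃]
        exact segmentAverage_mem_translateSpan ih (continuous_cone 0 0 C) ⟨(1, 1), by simp⟩
          (hasLineDerivAt_coneSpline_e₃ isAntiderivSeq_truncPow 0 0 C)
      | zero =>
        rw [show boxN (0 + 1) (0 + 1) (0 + 1) = hat from funext fun p => by rw [boxN]]
        exact hat_mem_translateSpan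

end BoxSpline

section PolynomialFunctions

open Finset.HasAntidiagonal (antidiagonal mem_antidiagonal)
open scoped translate

/-- The functions on the plane given by a polynomial of total degree at most `N`. -/
def polyFun (N : ℕ) : Submodule ℝ (Pt → ℝ) where
  carrier := {f | ∃ q : BPoly, q.totalDegree ≤ N ∧ evalP q = f}
  add_mem' := by
    rintro _ _ ⟨q, hq, rfl⟩ ⟨r, hr, rfl⟩
    exact ⟨q + r, (totalDegree_add q r).trans (max_le hq hr), by ext; simp [evalP]⟩
  zero_mem' := ⟨0, by simp, by ext; simp [evalP]⟩
  smul_mem' := by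
    rintro c _ ⟨q, hq, rfl⟩
    exact ⟨c • q, (totalDegree_smul_le c q).trans hq, by ext; simp [evalP]⟩

variable {N M : ℕ} {f g u v : Pt → ℝ}

lemma polyFun_mono : Monotone polyFun := by
  rintro N M hNM _ ⟨q, hq, rfl⟩
  exact ⟨q, hq.trans hNM, rfl⟩

lemma const_mem_polyFun (c : ℝ) : (fun _ => c) ∈ polyFun N :=
  ⟨C c, by simp, by ext; simp [evalP]⟩

lemma fst_mem_polyFun : Prod.fst ∈ polyFun 1 := ⟨X 0, by simp, by ext; simp [evalP]⟩

lemma snd_mem_polyFun : Prod.snd ∈ polyFun 1 := ⟨X 1, by simp, by ext; simp [evalP]⟩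

lemma mul_mem_polyFun (hf : f ∈ polyFun N) (hg : g ∈ polyFun M) : f * g ∈ polyFun (N + M) := by
  obtain ⟨q, hq, rfl⟩ := hf
  obtain ⟨r, hr, rfl⟩ := hg
  exact ⟨q * r, (totalDegree_mul q r).trans (add_le_add hq hr), by ext; simp [evalP]⟩

lemma pow_mem_polyFun (hf : f ∈ polyFun N) : ∀ k : ℕ, f ^ k ∈ polyFun (k * N)
  | 0 => const_mem_polyFun 1
  | k + 1 => by
    rw [pow_succ, add_one_mul]
    exact mul_mem_polyFun (pow_mem_polyFun hf k) hf

lemma comp_mem_polyFun (hf : f ∈ polyFun N) (hu : u ∈ polyFun 1) (hv : v ∈ polyFun 1) :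
    (fun p => f (u p, v p)) ∈ polyFun N := by
  obtain ⟨q, hq, rfl⟩ := hf
  have evalP_eq_sum : (fun p => evalP q (u p, v p)) =
      ∑ d ∈ q.support, q.coeff d • (u ^ d 0 * v ^ d 1) := by
    ext p
    simp [evalP, eval_eq', Fin.prod_univ_two]
  rw [evalP_eq_sum]
  refine Submodule.sum_mem _ fun d hd => Submodule.smul_mem _ _ ?_
  refine polyFun_mono ?_ (mul_mem_polyFun (pow_mem_polyFun hu (d 0)) (pow_mem_polyFun hv (d 1)))
  calc d 0 * 1 + d 1 * 1 = d.sum fun _ e => e := by simp [Finsupp.sum_fintype]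
    _ ≤ q.totalDegree := le_totalDegree hd
    _ ≤ N := hq

lemma swap_mem_polyFun (hf : f ∈ polyFun N) : (fun p => f p.swap) ∈ polyFun N :=
  comp_mem_polyFun hf snd_mem_polyFun fst_mem_polyFun

lemma translate_mem_polyFun (hf : f ∈ polyFun N) (w : Pt) : τ w f ∈ polyFun N :=
  comp_mem_polyFun (f := f) hf (sub_mem fst_mem_polyFun (const_mem_polyFun w.1))
    (sub_mem snd_mem_polyFun (const_mem_polyFun w.2))

lemma polyFun_le_contDiffSubmodule {n : WithTop ℕ∞} : polyFun N ≤ contDiffSubmodule Pt n := by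
  rintro _ ⟨q, -, rfl⟩
  rw [mem_contDiffSubmodule]
  unfold evalP
  simp only [eval_eq', Fin.prod_univ_two, Matrix.cons_val_zero, Matrix.cons_val_one]
  fun_prop

lemma divPow_comp_mem_polyFun (hf : f ∈ polyFun N) (k : ℕ) :
    (fun p => divPow k (f p)) ∈ polyFun (k * N) := by
  convert Submodule.smul_mem _ (k.factorial : ℝ)⁻¹ (pow_mem_polyFun hf k) using 1
  ext p
  simp [divPow, div_eq_inv_mul]

lemma conePiece_divPow_mem_polyFun (A B k : ℕ) :
    (fun p => conePiece divPow A B k p.1 p.2) ∈ polyFun (A + k) := by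
  have conePiece_eq_sum : (fun p : Pt => conePiece divPow A B k p.1 p.2) =
      ∑ ij ∈ antidiagonal A, ((B + ij.2).choose ij.2 : ℝ) •
        ((fun p : Pt => divPow ij.1 (p.1 - p.2)) * fun p : Pt => divPow (k + ij.2) p.2) := by
    ext p
    simp [conePiece, mul_assoc]
  rw [conePiece_eq_sum]
  refine Submodule.sum_mem _ fun ij hij => Submodule.smul_mem _ _ ?_
  have degree_eq : A + k = ij.1 * 1 + (k + ij.2) * 1 := by
    rw [← mem_antidiagonal.1 hij]
    ring
  rw [degree_eq]
  exact mul_mem_polyFun (divPow_comp_mem_polyFun (sub_mem fst_mem_polyFun snd_mem_polyFun) _)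
    (divPow_comp_mem_polyFun snd_mem_polyFun _)

end PolynomialFunctions

section PiecewiseSpaces

open scoped translate

/-- The functions that coincide with a member of `W` on each of the sets `S i`. -/
def piecewiseSubmodule {ι E : Type*} (W : Submodule ℝ (E → ℝ)) (S : ι → Set E) :
    Submodule ℝ (E → ℝ) where
  carrier := {f | ∀ i, ∃ g ∈ W, EqOn f g (S i)}
  add_mem' {f₁ f₂} hf₁ hf₂ i := by
    obtain ⟨g₁, hg₁, h₁⟩ := hf₁ i
    obtain ⟨g₂, hg₂, h₂⟩ := hf₂ i
    exact ⟨g₁ + g₂, add_mem hg₁ hg₂, fun p hp => congrArg₂ (· + ·) (h₁ hp) (h₂ hp)⟩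
  zero_mem' _ := ⟨0, zero_mem W, eqOn_refl _ _⟩
  smul_mem' c f hf i := by
    obtain ⟨g, hg, h⟩ := hf i
    exact ⟨c • g, W.smul_mem c hg, fun p hp => congrArg (c • ·) (h hp)⟩

lemma translate_mem_piecewiseSubmodule {ι E : Type*} [AddCommGroup E] {W : Submodule ℝ (E → ℝ)}
    {S : ι → Set E} {f : E → ℝ} {w : E} (hW : ∀ g ∈ W, τ w g ∈ W)
    (hS : ∀ i, ∃ j, ∀ p ∈ S i, p - w ∈ S j) (hf : f ∈ piecewiseSubmodule W S) :
    τ w f ∈ piecewiseSubmodule W S := by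
  intro i
  obtain ⟨j, hj⟩ := hS i
  obtain ⟨g, hg, hfg⟩ := hf j
  exact ⟨τ w g, hW g hg, fun p hp => hfg (hj p hp)⟩

lemma contDiffOn_of_mem_piecewise {ι E : Type*} [NormedAddCommGroup E] [NormedSpace ℝ E]
    {n : WithTop ℕ∞} {S : ι → Set E} {f : E → ℝ}
    (hf : f ∈ piecewiseSubmodule (contDiffSubmodule E n) S) (i : ι) : ContDiffOn ℝ n f (S i) := by
  obtain ⟨g, hg, hfg⟩ := hf i
  exact (mem_contDiffSubmodule.1 hg).contDiffOn.congr hfg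

/-- Two linear coordinates on the plane, both equal to `1` on the direction vector of type `i`, in
which the two triangles sharing an edge of type `i` fill a unit square with the edge as its main
diagonal. -/
def edgeCoord : Fin 3 → Pt →L[ℝ] Pt :=
  ![(ContinuousLinearMap.fst ℝ ℝ ℝ).prod (.fst ℝ ℝ ℝ - .snd ℝ ℝ ℝ),
    (ContinuousLinearMap.snd ℝ ℝ ℝ).prod (.snd ℝ ℝ ℝ - .fst ℝ ℝ ℝ),
    .id ℝ Pt]

/-- The union of the two closed triangles of the grid that share the edge of type `i` at `v`. -/
def edgeDiamond (i : Fin 3) (v : ℤ × ℤ) : Set Pt :=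
  {p | edgeCoord i (p - latticePt v) ∈ Icc 0 1 ×ˢ Icc 0 1}

lemma mem_edgeDiamond {i : Fin 3} {v : ℤ × ℤ} {p : Pt} :
    p ∈ edgeDiamond i v ↔ edgeCoord i (p - latticePt v) ∈ Icc 0 1 ×ˢ Icc 0 1 :=
  Iff.rfl

lemma mem_edgeDiamond_zero {v : ℤ × ℤ} {p : Pt} : p ∈ edgeDiamond 0 v ↔
    p.1 - v.1 ∈ Icc 0 1 ∧ p.1 - v.1 - (p.2 - v.2) ∈ Icc 0 1 :=
  Iff.rfl

lemma mem_edgeDiamond_one {v : ℤ × ℤ} {p : Pt} : p ∈ edgeDiamond 1 v ↔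
    p.2 - v.2 ∈ Icc 0 1 ∧ p.2 - v.2 - (p.1 - v.1) ∈ Icc 0 1 :=
  Iff.rfl

lemma mem_edgeDiamond_two {v : ℤ × ℤ} {p : Pt} : p ∈ edgeDiamond 2 v ↔
    p.1 - v.1 ∈ Icc 0 1 ∧ p.2 - v.2 ∈ Icc 0 1 :=
  Iff.rfl

lemma swap_mem_edgeDiamond {v : ℤ × ℤ} {p : Pt} (hp : p ∈ edgeDiamond 1 v) :
    p.swap ∈ edgeDiamond 0 v.swap :=
  hp

lemma isClosed_edgeDiamond (i : Fin 3) (v : ℤ × ℤ) : IsClosed (edgeDiamond i v) :=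
  (isClosed_Icc.prod isClosed_Icc).preimage (by fun_prop)

lemma edgeCoord_dirZ (i : Fin 3) : edgeCoord i (latticePt (dirZ i)) = 1 := by
  fin_cases i <;> simp [edgeCoord, dirZ, Prod.ext_iff]

lemma seg_subset_interior_edgeDiamond (ε : Edge) :
    Edge.seg ε ⊆ interior (edgeDiamond ε.2 ε.1) := by
  let U : Set Pt := {p | edgeCoord ε.2 (p - latticePt ε.1) ∈ Ioo 0 1 ×ˢ Ioo 0 1}
  have isOpen_U : IsOpen U := (isOpen_Ioo.prod isOpen_Ioo).preimage (by fun_prop)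
  have U_subset : U ⊆ edgeDiamond ε.2 ε.1 := fun p hp =>
    prod_mono Ioo_subset_Icc_self Ioo_subset_Icc_self hp
  rintro p ⟨t, ht₀, ht₁, hp⟩
  have sub_eq : p - latticePt ε.1 = t • latticePt (dirZ ε.2) := by simp [hp]
  have coord_eq : edgeCoord ε.2 (p - latticePt ε.1) = (t, t) := by
    rw [sub_eq, map_smul, edgeCoord_dirZ]
    simp [Prod.ext_iff]
  have p_mem_U : edgeCoord ε.2 (p - latticePt ε.1) ∈ Ioo (0 : ℝ) 1 ×ˢ Ioo (0 : ℝ) 1 := by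
    rw [coord_eq]
    exact ⟨⟨ht₀, ht₁⟩, ht₀, ht₁⟩
  exact interior_maximal U_subset isOpen_U p_mem_U

lemma mem_toSet_lower {v : ℤ × ℤ} {p : Pt} : p ∈ Tri.toSet ⟨v, false⟩ ↔
    v.2 < p.2 ∧ p.2 - v.2 < p.1 - v.1 ∧ p.1 < v.1 + 1 :=
  Iff.rfl

lemma mem_toSet_upper {v : ℤ × ℤ} {p : Pt} : p ∈ Tri.toSet ⟨v, true⟩ ↔
    v.1 < p.1 ∧ p.1 - v.1 < p.2 - v.2 ∧ p.2 < v.2 + 1 :=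
  Iff.rfl

lemma cl_subset_edgeDiamond {T : Tri} {ε : Edge} (h : ε ∈ T.edges) :
    T.cl ⊆ edgeDiamond ε.2 ε.1 := by
  refine closure_minimal (fun p hp => ?_) (isClosed_edgeDiamond _ _)
  obtain ⟨v, _ | _⟩ := T
  · obtain rfl | rfl | rfl : ε = (v, 0) ∨ ε = ((v.1 + 1, v.2), 1) ∨ ε = (v, 2) := by
      simpa [Tri.edges] using h
    all_goals
      rw [mem_toSet_lower] at hp
      simp only [mem_edgeDiamond_zero, mem_edgeDiamond_one, mem_edgeDiamond_two, mem_Icc]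
      push_cast
      grind
  · obtain rfl | rfl | rfl : ε = ((v.1, v.2 + 1), 0) ∨ ε = (v, 1) ∨ ε = (v, 2) := by
      simpa [Tri.edges] using h
    all_goals
      rw [mem_toSet_upper] at hp
      simp only [mem_edgeDiamond_zero, mem_edgeDiamond_one, mem_edgeDiamond_two, mem_Icc]
      push_cast
      grind

lemma diamond_subset_edgeDiamond (M : Finset Tri) (ε : Edge) :
    diamond M ε ⊆ edgeDiamond ε.2 ε.1 :=
  iUnion₂_subset fun _ hT => cl_subset_edgeDiamond (Finset.mem_filter.1 hT).2

variable {f g : Pt → ℝ}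

lemma mem_piecewise_edgeDiamond_of_mem_translateSpan {i : Fin 3} {n : WithTop ℕ∞}
    (hg : g ∈ translateSpan latticePt.range f)
    (hf : f ∈ piecewiseSubmodule (contDiffSubmodule Pt n) (edgeDiamond i)) :
    g ∈ piecewiseSubmodule (contDiffSubmodule Pt n) (edgeDiamond i) := by
  refine mem_of_mem_translateSpan hg hf ?_
  rintro _ ⟨w, rfl⟩ h hh
  refine translate_mem_piecewiseSubmodule (fun g hg => contDiff_translate hg _) (fun v => ?_) hh
  refine ⟨v - w, fun p hp => ?_⟩
  rwa [mem_edgeDiamond, map_sub latticePt, sub_sub_sub_cancel_right]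

lemma mem_piecewise_toSet_of_mem_translateSpan {N : ℕ}
    (hg : g ∈ translateSpan latticePt.range f)
    (hf : f ∈ piecewiseSubmodule (polyFun N) Tri.toSet) :
    g ∈ piecewiseSubmodule (polyFun N) Tri.toSet := by
  refine mem_of_mem_translateSpan hg hf ?_
  rintro _ ⟨w, rfl⟩ h hh
  refine translate_mem_piecewiseSubmodule (fun g hg => translate_mem_polyFun hg _) ?_ hh
  rintro ⟨v, up⟩
  refine ⟨⟨v - w, up⟩, fun p hp => ?_⟩
  cases up <;>
    simpa [mem_toSet_lower, mem_toSet_upper, sub_add_eq_add_sub] using hp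

end PiecewiseSpaces

section ConeSplinePieces

lemma conePiece_truncPow_of_nonneg {A B k : ℕ} {x y : ℝ} (hy : 0 ≤ y) :
    conePiece truncPow A B k x y = conePiece divPow A B (k + 1) x y := by
  simp only [conePiece, truncPow_of_nonneg hy, add_right_comm]

lemma conePiece_truncPow_of_nonpos {A B k : ℕ} {x y : ℝ} (hy : y ≤ 0) :
    conePiece truncPow A B k x y = 0 := by
  simp [conePiece, truncPow_of_nonpos hy]

lemma exists_polyFun_eqOn_strip (A B k : ℕ) (l : ℤ) : ∃ g ∈ polyFun (A + k + 1),
    ∀ p : Pt, p.2 ∈ Icc (l : ℝ) (l + 1) → conePiece truncPow A B k p.1 p.2 = g p := by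
  rcases le_or_gt 0 l with hl | hl
  · have hl' : (0 : ℝ) ≤ l := by exact_mod_cast hl
    exact ⟨_, conePiece_divPow_mem_polyFun A B (k + 1), fun p hp =>
      conePiece_truncPow_of_nonneg (hl'.trans hp.1)⟩
  · have hl' : (l : ℝ) + 1 ≤ 0 := by exact_mod_cast hl
    exact ⟨0, zero_mem _, fun p hp => conePiece_truncPow_of_nonpos (hp.2.trans hl')⟩

lemma exists_polyFun_eqOn_coneSpline_of_le (A B C : ℕ) (l : ℤ) :
    ∃ g ∈ polyFun (A + B + C + 1), ∀ p : Pt, p.2 ≤ p.1 → p.2 - l ∈ Icc 0 1 →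
      coneSpline truncPow A B C p = g p := by
  obtain ⟨g, hg, hfg⟩ := exists_polyFun_eqOn_strip A B (B + C) l
  refine ⟨g, by rwa [← add_assoc] at hg, fun p hle hp => ?_⟩
  rw [coneSpline_of_le hle]
  exact hfg p ⟨by linarith [hp.1], by linarith [hp.2]⟩

lemma exists_polyFun_eqOn_coneSpline_of_ge (A B C : ℕ) (k : ℤ) :
    ∃ g ∈ polyFun (A + B + C + 1), ∀ p : Pt, p.1 ≤ p.2 → p.1 - k ∈ Icc 0 1 →
      coneSpline truncPow A B C p = g p := by
  obtain ⟨g, hg, hfg⟩ := exists_polyFun_eqOn_coneSpline_of_le B A C k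
  refine ⟨_, swap_mem_polyFun (add_comm A B ▸ hg), fun p hle hp => ?_⟩
  rw [← coneSpline_swap]
  exact hfg p.swap hle hp

lemma coneSpline_mem_piecewise_toSet (A B C : ℕ) :
    coneSpline truncPow A B C ∈ piecewiseSubmodule (polyFun (A + B + C + 1)) Tri.toSet := by
  rintro ⟨⟨k, l⟩, up⟩
  have mem_unitSquare {p : Pt} (hp : p ∈ Tri.toSet ⟨(k, l), up⟩) :
      p.1 - k ∈ Icc 0 1 ∧ p.2 - l ∈ Icc 0 1 := by
    cases up <;> simp only [mem_toSet_lower, mem_toSet_upper] at hp <;> grind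
  have one_side : (∀ p ∈ Tri.toSet ⟨(k, l), up⟩, p.2 ≤ p.1) ∨
      ∀ p ∈ Tri.toSet ⟨(k, l), up⟩, p.1 ≤ p.2 := by
    rcases lt_trichotomy l k with hlk | rfl | hkl
    · have hlk' : (l : ℝ) + 1 ≤ k := by exact_mod_cast hlk
      exact .inl fun p hp => by linarith [(mem_unitSquare hp).1.1, (mem_unitSquare hp).2.2]
    · cases up
      · exact .inl fun p hp => by linarith [(mem_toSet_lower.1 hp).2.1]
      · exact .inr fun p hp => by linarith [(mem_toSet_upper.1 hp).2.1]
    · have hkl' : (k : ℝ) + 1 ≤ l := by exact_mod_cast hkl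
      exact .inr fun p hp => by linarith [(mem_unitSquare hp).1.2, (mem_unitSquare hp).2.1]
  rcases one_side with below | above
  · obtain ⟨g, hg, hfg⟩ := exists_polyFun_eqOn_coneSpline_of_le A B C l
    exact ⟨g, hg, fun p hp => hfg p (below p hp) (mem_unitSquare hp).2⟩
  · obtain ⟨g, hg, hfg⟩ := exists_polyFun_eqOn_coneSpline_of_ge A B C k
    exact ⟨g, hg, fun p hp => hfg p (above p hp) (mem_unitSquare hp).1⟩

lemma coneSpline_mem_piecewise_edgeDiamond_zero (A B C : ℕ) : coneSpline truncPow A B C ∈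
    piecewiseSubmodule (contDiffSubmodule Pt (B + C : ℕ)) (edgeDiamond 0) := by
  rintro ⟨k, l⟩
  rcases le_or_gt l k with hlk | hkl
  · have hlk' : (l : ℝ) ≤ k := by exact_mod_cast hlk
    refine ⟨_, contDiff_conePiece isAntiderivSeq_truncPow A B (B + C), fun p hp => ?_⟩
    exact coneSpline_of_le (by linarith [(mem_edgeDiamond_zero.1 hp).2.1])
  · have hkl' : (k : ℝ) + 1 ≤ l := by exact_mod_cast hkl
    obtain ⟨g, hg, hfg⟩ := exists_polyFun_eqOn_coneSpline_of_ge A B C k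
    refine ⟨g, polyFun_le_contDiffSubmodule hg, fun p hp => ?_⟩
    rw [mem_edgeDiamond_zero] at hp
    exact hfg p (by linarith [hp.2.2]) hp.1

lemma coneSpline_mem_piecewise_edgeDiamond_one (A B C : ℕ) : coneSpline truncPow A B C ∈
    piecewiseSubmodule (contDiffSubmodule Pt (A + C : ℕ)) (edgeDiamond 1) := by
  intro v
  obtain ⟨g, hg, hfg⟩ := coneSpline_mem_piecewise_edgeDiamond_zero B A C v.swap
  refine ⟨fun p => g p.swap,
    (mem_contDiffSubmodule.1 hg).comp (contDiff_snd.prodMk contDiff_fst), fun p hp => ?_⟩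
  rw [← coneSpline_swap]
  exact hfg (swap_mem_edgeDiamond hp)

lemma coneSpline_truncPow_of_nonneg {A B C : ℕ} {p : Pt} (h₁ : 0 ≤ p.1) (h₂ : 0 ≤ p.2) :
    coneSpline truncPow A B C p = coneSpline divPow A B (C + 1) p := by
  simp only [coneSpline, conePiece_truncPow_of_nonneg h₁, conePiece_truncPow_of_nonneg h₂,
    add_assoc]

lemma coneSpline_truncPow_of_nonpos {A B C : ℕ} {p : Pt} (h₁ : p.1 ≤ 0) (h₂ : p.2 ≤ 0) :
    coneSpline truncPow A B C p = 0 := by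
  simp only [coneSpline, conePiece_truncPow_of_nonpos h₁, conePiece_truncPow_of_nonpos h₂,
    ite_self]

lemma coneSpline_mem_piecewise_edgeDiamond_two (A B C : ℕ) : coneSpline truncPow A B C ∈
    piecewiseSubmodule (contDiffSubmodule Pt (A + B : ℕ)) (edgeDiamond 2) := by
  rintro ⟨k, l⟩
  simp only [EqOn, mem_edgeDiamond_two]
  rcases lt_trichotomy l k with hlk | rfl | hkl
  · have hlk' : (l : ℝ) + 1 ≤ k := by exact_mod_cast hlk
    obtain ⟨g, hg, hfg⟩ := exists_polyFun_eqOn_coneSpline_of_le A B C l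
    exact ⟨g, polyFun_le_contDiffSubmodule hg, fun p hp =>
      hfg p (by linarith [hp.1.1, hp.2.2]) hp.2⟩
  · rcases le_or_gt 0 l with hl | hl
    · have hl' : (0 : ℝ) ≤ l := by exact_mod_cast hl
      exact ⟨_, contDiff_coneSpline_divPow le_rfl (C + 1), fun p hp =>
        coneSpline_truncPow_of_nonneg (by linarith [hp.1.1]) (by linarith [hp.2.1])⟩
    · have hl' : (l : ℝ) + 1 ≤ 0 := by exact_mod_cast hl
      exact ⟨0, zero_mem _, fun p hp =>
        coneSpline_truncPow_of_nonpos (by linarith [hp.1.2]) (by linarith [hp.2.2])⟩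
  · have hkl' : (k : ℝ) + 1 ≤ l := by exact_mod_cast hkl
    obtain ⟨g, hg, hfg⟩ := exists_polyFun_eqOn_coneSpline_of_ge A B C k
    exact ⟨g, polyFun_le_contDiffSubmodule hg, fun p hp =>
      hfg p (by linarith [hp.1.2, hp.2.1]) hp.1⟩

lemma coneSpline_mem_piecewise_edgeDiamond (A B C : ℕ) : ∀ i : Fin 3,
    coneSpline truncPow A B C ∈
      piecewiseSubmodule (contDiffSubmodule Pt (![B + C, A + C, A + B] i : ℕ)) (edgeDiamond i)
  | 0 => coneSpline_mem_piecewise_edgeDiamond_zero A B C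
  | 1 => coneSpline_mem_piecewise_edgeDiamond_one A B C
  | 2 => coneSpline_mem_piecewise_edgeDiamond_two A B C

end ConeSplinePieces

/-- `B_n` is globally `C^r` on `ℝ²` with
`r = min{n₁+n₂, n₁+n₃, n₂+n₃} - 2`; it is `C^{dᵢ(n)}` on a neighbourhood of
every edge of `G` of type `i`, where `d(n) = (n₂+n₃-2, n₁+n₃-2, n₁+n₂-2)`; and
consequently `B_n ∈ S^{d(n)}(M, P_{n₁+n₂+n₃-2})` for every multicell domain. -/
theorem statement15 (n₁ n₂ n₃ : ℕ) (h₁ : 1 ≤ n₁) (h₂ : 1 ≤ n₂) (h₃ : 1 ≤ n₃) :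
    ContDiff ℝ ((min (min (n₁ + n₂) (n₁ + n₃)) (n₂ + n₃) - 2 : ℕ))
      (boxN n₁ n₂ n₃) ∧
    (∀ ε : Edge, ∃ U : Set Pt, IsOpen U ∧ Edge.seg ε ⊆ U ∧
      ContDiffOn ℝ ((![n₂ + n₃ - 2, n₁ + n₃ - 2, n₁ + n₂ - 2] ε.2 : ℕ))
        (boxN n₁ n₂ n₃) U) ∧
    (∀ M : Finset Tri, M.Nonempty →
      boxN n₁ n₂ n₃ ∈
        SplineSpace M {q : BPoly | q.totalDegree ≤ n₁ + n₂ + n₃ - 2}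
          ![n₂ + n₃ - 2, n₁ + n₃ - 2, n₁ + n₂ - 2]) := by
  obtain ⟨A, rfl⟩ := Nat.exists_eq_add_of_le' h₁
  obtain ⟨B, rfl⟩ := Nat.exists_eq_add_of_le' h₂
  obtain ⟨C, rfl⟩ := Nat.exists_eq_add_of_le' h₃
  have add_one_add_one_sub_two (k l : ℕ) : k + 1 + (l + 1) - 2 = k + l := by omega
  have degree_eq : A + 1 + (B + 1) + (C + 1) - 2 = A + B + C + 1 := by omega
  simp only [add_one_add_one_sub_two, degree_eq]
  have box_mem := boxN_mem_translateSpan A B C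
  have smooth {r : ℕ} (hAB : r ≤ A + B) (hAC : r ≤ A + C) (hBC : r ≤ B + C) :=
    contDiff_of_mem_translateSpan box_mem (contDiff_coneSpline isAntiderivSeq_truncPow hAB hAC hBC)
  have edgewise (ε : Edge) := contDiffOn_of_mem_piecewise
    (mem_piecewise_edgeDiamond_of_mem_translateSpan box_mem
      (coneSpline_mem_piecewise_edgeDiamond A B C ε.2)) ε.1
  have trianglewise := mem_piecewise_toSet_of_mem_translateSpan box_mem
    (coneSpline_mem_piecewise_toSet A B C)
  refine ⟨smooth (by omega) (by omega) (by omega), fun ε => ?_,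
    fun M _ => ⟨⟨?_, fun T _ => ?_⟩, fun ε _ => ?_⟩⟩
  · exact ⟨interior (edgeDiamond ε.2 ε.1), isOpen_interior, seg_subset_interior_edgeDiamond ε,
      (edgewise ε).mono interior_subset⟩
  · exact (smooth (Nat.zero_le _) (Nat.zero_le _) (Nat.zero_le _)).continuous.continuousOn
  · obtain ⟨_, ⟨q, hq, rfl⟩, h⟩ := trianglewise T
    exact ⟨q, hq, h⟩
  · exact (edgewise ε).mono (diamond_subset_edgeDiamond M ε)

end
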